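/- Let Ω ⊆ ℝ^N be Lebesgue measurable, T > 0, φ > 1, and let σ be real with σ > dim̄_B^φ(∞,Ω) and σ > -N. Then the integral ∫_{B_T(0)^c ∩ Ω} |x|^{-σ-N} dx is finite. In particular, the distance zeta function at infinity ζ_{∞,Ω}(s) := ∫_{B_T(0)^c ∩ Ω} |x|^{-s-N} dx converges absolutely for every complex s with Re s > max{-N, dim̄_B^φ(∞,Ω)}. -/

import Mathlib

open MeasureTheory Filter Set
open scoped ENNReal NNReal Topology

noncomputable section

/-- The `[a,b)`-shell centered at the origin in `ℝ^N`. -/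
def shell (N : ℕ) (a b : ℝ) : Set (EuclideanSpace ℝ (Fin N)) :=
  {x | a ≤ ‖x‖ ∧ ‖x‖ < b}

/-- The complement of the open ball `B_t(0)` in `ℝ^N`. -/
def farBall (N : ℕ) (t : ℝ) : Set (EuclideanSpace ℝ (Fin N)) :=
  {x | t ≤ ‖x‖}

/-- Upper φ-shell Minkowski content of `Ω` at infinity. -/
def upperShellContent (N : ℕ) (Ω : Set (EuclideanSpace ℝ (Fin N))) (φ r : ℝ) : ℝ≥0∞ :=
  Filter.limsup (fun t : ℝ =>
    volume (shell N t (φ * t) ∩ Ω) / ENNReal.ofReal (t ^ ((N : ℝ) + r))) Filter.atTop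

/-- Lower φ-shell Minkowski content of `Ω` at infinity. -/
def lowerShellContent (N : ℕ) (Ω : Set (EuclideanSpace ℝ (Fin N))) (φ r : ℝ) : ℝ≥0∞ :=
  Filter.liminf (fun t : ℝ =>
    volume (shell N t (φ * t) ∩ Ω) / ENNReal.ofReal (t ^ ((N : ℝ) + r))) Filter.atTop

/-- Upper Minkowski content of `Ω` at infinity. -/
def upperContent (N : ℕ) (Ω : Set (EuclideanSpace ℝ (Fin N))) (r : ℝ) : ℝ≥0∞ :=
  Filter.limsup (fun t : ℝ =>
    volume (farBall N t ∩ Ω) / ENNReal.ofReal (t ^ ((N : ℝ) + r))) Filter.atTop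

/-- Lower Minkowski content of `Ω` at infinity. -/
def lowerContent (N : ℕ) (Ω : Set (EuclideanSpace ℝ (Fin N))) (r : ℝ) : ℝ≥0∞ :=
  Filter.liminf (fun t : ℝ =>
    volume (farBall N t ∩ Ω) / ENNReal.ofReal (t ^ ((N : ℝ) + r))) Filter.atTop

/-- Upper φ-shell Minkowski dimension of `Ω` at infinity, as an extended real. -/
def upperShellDim (N : ℕ) (Ω : Set (EuclideanSpace ℝ (Fin N))) (φ : ℝ) : EReal :=
  sInf ((fun r : ℝ => (r : EReal)) '' {r : ℝ | upperShellContent N Ω φ r = 0})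

/-- Lower φ-shell Minkowski dimension of `Ω` at infinity, as an extended real. -/
def lowerShellDim (N : ℕ) (Ω : Set (EuclideanSpace ℝ (Fin N))) (φ : ℝ) : EReal :=
  sInf ((fun r : ℝ => (r : EReal)) '' {r : ℝ | lowerShellContent N Ω φ r = 0})

/-!
Cover the outside of the ball of radius `t` by the geometric shells
`c ^ n * t ≤ ‖x‖ < c ^ (n + 1) * t`. On the `n`-th shell `‖x‖ ^ p` is comparable to
`(c ^ n * t) ^ p`, so if the shell has measure `O((c ^ n * t) ^ d)`, its contribution to the
integral is `O((c ^ (p + d)) ^ n)`, and these are summable when `p + d < 0`. Only the distribution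
of the norm matters, so this is an argument about a measure on the real line. For `Ω` of upper
`φ`-shell dimension `< σ` it applies with `c = φ`, `p = -σ - N` and `d = N + r` for some `r < σ`.
-/

theorem rpow_le_rpow_abs_mul_rpow_of_mem_Icc {u c x : ℝ} (p : ℝ) (hu : 0 < u)
    (hx : x ∈ Icc u (c * u)) : x ^ p ≤ c ^ |p| * u ^ p := by
  have hratio : 1 ≤ x / u := (one_le_div hu).2 hx.1
  have hratio_le : x / u ≤ c := (div_le_iff₀ hu).2 hx.2
  calc x ^ p = (x / u) ^ p * u ^ p := by
        rw [← Real.mul_rpow (by positivity) hu.le, div_mul_cancel₀ x hu.ne']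
    _ ≤ (x / u) ^ |p| * u ^ p := by gcongr; exact le_abs_self p
    _ ≤ c ^ |p| * u ^ p := by gcongr

theorem Ici_subset_iUnion_Ico_pow_mul {t c : ℝ} (ht : 0 < t) (hc : 1 < c) :
    Ici t ⊆ ⋃ n : ℕ, Ico (c ^ n * t) (c * (c ^ n * t)) := by
  intro x hx
  obtain ⟨n, hle, hlt⟩ := exists_nat_pow_near ((one_le_div ht).2 hx) hc
  refine mem_iUnion.2 ⟨n, (le_div_iff₀ ht).1 hle, ?_⟩
  rw [← mul_assoc, ← pow_succ']
  exact (div_lt_iff₀ ht).1 hlt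

section RadialMeasure

variable {ν : Measure ℝ} {c d p : ℝ} {M : ℝ≥0}

theorem setLIntegral_rpow_Ico_le {u : ℝ} (hu : 0 < u) (hc : 0 ≤ c)
    (hν : ν (Ico u (c * u)) ≤ M * ENNReal.ofReal (u ^ d)) :
    ∫⁻ x in Ico u (c * u), ENNReal.ofReal (x ^ p) ∂ν ≤
      ENNReal.ofReal (c ^ |p| * M * u ^ (p + d)) := by
  calc ∫⁻ x in Ico u (c * u), ENNReal.ofReal (x ^ p) ∂ν
      ≤ ∫⁻ _ in Ico u (c * u), ENNReal.ofReal (c ^ |p| * u ^ p) ∂ν :=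
        setLIntegral_mono' measurableSet_Ico fun _ hx =>
          ENNReal.ofReal_le_ofReal
            (rpow_le_rpow_abs_mul_rpow_of_mem_Icc p hu (Ico_subset_Icc_self hx))
    _ = ENNReal.ofReal (c ^ |p| * u ^ p) * ν (Ico u (c * u)) := setLIntegral_const _ _
    _ ≤ ENNReal.ofReal (c ^ |p| * u ^ p) * (M * ENNReal.ofReal (u ^ d)) := by gcongr
    _ = ENNReal.ofReal (c ^ |p| * M * u ^ (p + d)) := by
        rw [← ENNReal.ofReal_coe_nnreal, ← ENNReal.ofReal_mul M.coe_nonneg,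
          ← ENNReal.ofReal_mul (by positivity), Real.rpow_add hu]
        ring_nf

theorem integrableOn_rpow_Ici_of_forall_measure_Ico_le {t : ℝ} (ht : 0 < t) (hc : 1 < c)
    (hpd : p + d < 0) (hν : ∀ u ≥ t, ν (Ico u (c * u)) ≤ M * ENNReal.ofReal (u ^ d)) :
    IntegrableOn (fun x => x ^ p) (Ici t) ν := by
  have hc₀ : 0 < c := zero_lt_one.trans hc
  have hshell (n : ℕ) : ∫⁻ x in Ico (c ^ n * t) (c * (c ^ n * t)), ENNReal.ofReal (x ^ p) ∂ν ≤
      ENNReal.ofReal (c ^ |p| * M * ((c ^ (p + d)) ^ n * t ^ (p + d))) := by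
    rw [Real.rpow_pow_comm hc₀.le, ← Real.mul_rpow (by positivity) ht.le]
    exact setLIntegral_rpow_Ico_le (by positivity) hc₀.le
      (hν _ (le_mul_of_one_le_left ht.le (one_le_pow₀ hc.le)))
  have hgeom : Summable fun n : ℕ => c ^ |p| * M * ((c ^ (p + d)) ^ n * t ^ (p + d)) :=
    ((summable_geometric_of_lt_one (by positivity)
      (Real.rpow_lt_one_of_one_lt_of_neg hc hpd)).mul_right _).mul_left _
  have hfinite : ∫⁻ x in Ici t, ENNReal.ofReal (x ^ p) ∂ν < ⊤ :=
    calc ∫⁻ x in Ici t, ENNReal.ofReal (x ^ p) ∂ν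
        ≤ ∫⁻ x in ⋃ n : ℕ, Ico (c ^ n * t) (c * (c ^ n * t)), ENNReal.ofReal (x ^ p) ∂ν :=
          lintegral_mono_set (Ici_subset_iUnion_Ico_pow_mul ht hc)
      _ ≤ ∑' n : ℕ, ∫⁻ x in Ico (c ^ n * t) (c * (c ^ n * t)), ENNReal.ofReal (x ^ p) ∂ν :=
          lintegral_iUnion_le _ _
      _ ≤ ∑' n : ℕ, ENNReal.ofReal (c ^ |p| * M * ((c ^ (p + d)) ^ n * t ^ (p + d))) :=
          ENNReal.tsum_le_tsum hshell
      _ < ⊤ := hgeom.tsum_ofReal_lt_top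
  have hnonneg : ∀ᵐ x ∂ν.restrict (Ici t), 0 ≤ x ^ p :=
    ae_restrict_of_forall_mem measurableSet_Ici fun x hx => Real.rpow_nonneg (ht.le.trans hx) p
  exact ⟨by fun_prop, (hasFiniteIntegral_iff_ofReal hnonneg).2 hfinite⟩

theorem integrableOn_rpow_Ici_of_eventually_measure_Ico_le [IsFiniteMeasureOnCompacts ν] {T : ℝ}
    (hT : 0 < T) (hc : 1 < c) (hpd : p + d < 0)
    (hν : ∀ᶠ u in atTop, ν (Ico u (c * u)) ≤ M * ENNReal.ofReal (u ^ d)) :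
    IntegrableOn (fun x => x ^ p) (Ici T) ν := by
  obtain ⟨t, htail, hTt⟩ :=
    ((eventually_forall_ge_atTop.2 hν).and (eventually_ge_atTop T)).exists
  have hcont : ContinuousOn (fun x : ℝ => x ^ p) (Icc T t) := fun x hx =>
    (Real.continuousAt_rpow_const x p (.inl (hT.trans_le hx.1).ne')).continuousWithinAt
  rw [← Icc_union_Ici_eq_Ici hTt]
  exact (hcont.integrableOn_compact isCompact_Icc).union
    (integrableOn_rpow_Ici_of_forall_measure_Ico_le (hT.trans_le hTt) hc hpd htail)

end RadialMeasure

section NormedGroup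

variable {E : Type*} [SeminormedAddCommGroup E] [MeasurableSpace E] [OpensMeasurableSpace E]
  {μ : Measure E}

theorem isFiniteMeasureOnCompacts_map_norm [ProperSpace E] [IsFiniteMeasureOnCompacts μ] :
    IsFiniteMeasureOnCompacts (μ.map norm) where
  lt_top_of_isCompact K hK := by
    rw [Measure.map_apply continuous_norm.measurable hK.measurableSet]
    obtain ⟨R, hR⟩ := hK.bddAbove
    exact (isBounded_iff_forall_norm_le.2 ⟨R, fun _ hx => hR hx⟩).measure_lt_top

theorem integrableOn_norm_rpow_of_eventually_measure_shell_le [ProperSpace E]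
    [IsFiniteMeasureOnCompacts μ] {T c d p : ℝ} {M : ℝ≥0} (hT : 0 < T) (hc : 1 < c)
    (hpd : p + d < 0)
    (hμ : ∀ᶠ u in atTop, μ {x | u ≤ ‖x‖ ∧ ‖x‖ < c * u} ≤ M * ENNReal.ofReal (u ^ d)) :
    IntegrableOn (fun x => ‖x‖ ^ p) {x | T ≤ ‖x‖} μ := by
  have := isFiniteMeasureOnCompacts_map_norm (μ := μ)
  have hradial : ∀ᶠ u in atTop, μ.map norm (Ico u (c * u)) ≤ M * ENNReal.ofReal (u ^ d) := by
    filter_upwards [hμ] with u hu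
    rwa [Measure.map_apply continuous_norm.measurable measurableSet_Ico]
  have hint := integrableOn_rpow_Ici_of_eventually_measure_Ico_le hT hc hpd hradial
  rw [IntegrableOn, Measure.restrict_map continuous_norm.measurable measurableSet_Ici] at hint
  exact hint.comp_measurable continuous_norm.measurable

theorem integrableOn_norm_cpow_iff {S : Set E} (hS : ∀ x ∈ S, 0 < ‖x‖) (s : ℂ) :
    IntegrableOn (fun x => (‖x‖ : ℂ) ^ s) S μ ↔ IntegrableOn (fun x => ‖x‖ ^ s.re) S μ := by
  have hpos : ∀ᵐ x ∂μ.restrict S, 0 < ‖x‖ :=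
    (ae_restrict_iff (measurableSet_lt measurable_const continuous_norm.measurable)).2
      (.of_forall hS)
  refine integrable_congr' ?_ ?_ (hpos.mono fun x hx => ?_)
  · exact ((Complex.measurable_ofReal.comp continuous_norm.measurable).pow_const
      s).aestronglyMeasurable
  · exact (continuous_norm.measurable.pow_const s.re).aestronglyMeasurable
  · rw [Complex.norm_cpow_eq_rpow_re_of_pos hx, Real.norm_of_nonneg (by positivity)]

end NormedGroup

section Shell

variable {N : ℕ} {Ω : Set (EuclideanSpace ℝ (Fin N))} {φ σ : ℝ}

theorem measurableSet_shell (N : ℕ) (a b : ℝ) : MeasurableSet (shell N a b) :=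
  measurable_norm measurableSet_Ico

theorem measurableSet_farBall (N : ℕ) (t : ℝ) : MeasurableSet (farBall N t) :=
  measurable_norm measurableSet_Ici

theorem eventually_volume_shell_le_of_upperShellContent_lt {r : ℝ} {M : ℝ≥0∞}
    (h : upperShellContent N Ω φ r < M) :
    ∀ᶠ t in atTop, volume (shell N t (φ * t) ∩ Ω) ≤ M * ENNReal.ofReal (t ^ ((N : ℝ) + r)) := by
  filter_upwards [eventually_lt_of_limsup_lt h, eventually_gt_atTop 0] with t hlt ht
  have hpos : 0 < ENNReal.ofReal (t ^ ((N : ℝ) + r)) :=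
    ENNReal.ofReal_pos.2 (Real.rpow_pos_of_pos ht _)
  exact (ENNReal.div_le_iff hpos.ne' ENNReal.ofReal_ne_top).1 hlt.le

theorem exists_lt_upperShellContent_eq_zero_of_upperShellDim_lt (h : upperShellDim N Ω φ < σ) :
    ∃ r < σ, upperShellContent N Ω φ r = 0 := by
  obtain ⟨_, ⟨r, hr, rfl⟩, hrσ⟩ := sInf_lt_iff.1 h
  exact ⟨r, EReal.coe_lt_coe_iff.1 hrσ, hr⟩

theorem integrableOn_norm_rpow_farBall_inter {T : ℝ} (hT : 0 < T) (hφ : 1 < φ)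
    (hσ : upperShellDim N Ω φ < σ) :
    IntegrableOn (fun x => ‖x‖ ^ (-σ - (N : ℝ))) (farBall N T ∩ Ω) := by
  obtain ⟨r, hrσ, hcontent⟩ := exists_lt_upperShellContent_eq_zero_of_upperShellDim_lt hσ
  have hcontent_lt : upperShellContent N Ω φ r < (1 : ℝ≥0) := by simp [hcontent]
  have hshell : ∀ᶠ t in atTop, volume.restrict Ω (shell N t (φ * t)) ≤
      (1 : ℝ≥0) * ENNReal.ofReal (t ^ ((N : ℝ) + r)) := by
    filter_upwards [eventually_volume_shell_le_of_upperShellContent_lt hcontent_lt] with t ht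
    rwa [Measure.restrict_apply (measurableSet_shell N t (φ * t))]
  rw [IntegrableOn, ← Measure.restrict_restrict (measurableSet_farBall N T)]
  exact integrableOn_norm_rpow_of_eventually_measure_shell_le hT hφ (by linarith) hshell

end Shell

theorem zeta_at_infinity_absolutely_convergent_general
    (N : ℕ) (Ω : Set (EuclideanSpace ℝ (Fin N))) (T : ℝ) (hT : 0 < T) (φ : ℝ) (hφ : 1 < φ)
    (σ : ℝ) (hσdim : upperShellDim N Ω φ < (σ : EReal)) :
    (∫⁻ x in farBall N T ∩ Ω, ENNReal.ofReal (‖x‖ ^ (-σ - (N : ℝ)))) < ⊤ ∧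
    ∀ s : ℂ, upperShellDim N Ω φ < (s.re : EReal) →
      IntegrableOn (fun x : EuclideanSpace ℝ (Fin N) =>
        ((‖x‖ : ℂ)) ^ (-s - (N : ℂ))) (farBall N T ∩ Ω) volume := by
  refine ⟨(integrableOn_norm_rpow_farBall_inter hT hφ hσdim).lintegral_lt_top, fun s hs => ?_⟩
  rw [integrableOn_norm_cpow_iff fun x hx => hT.trans_le hx.1]
  simpa using integrableOn_norm_rpow_farBall_inter hT hφ hs

theorem zeta_at_infinity_absolutely_convergent
    (N : ℕ) (Ω : Set (EuclideanSpace ℝ (Fin N))) (hΩ : MeasurableSet Ω)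
    (T : ℝ) (hT : 0 < T) (φ : ℝ) (hφ : 1 < φ)
    (σ : ℝ) (hσdim : upperShellDim N Ω φ < (σ : EReal)) (hσN : -(N : ℝ) < σ) :
    (∫⁻ x in farBall N T ∩ Ω, ENNReal.ofReal (‖x‖ ^ (-σ - (N : ℝ)))) < ⊤ ∧
    ∀ s : ℂ, upperShellDim N Ω φ < (s.re : EReal) → -(N : ℝ) < s.re →
      IntegrableOn (fun x : EuclideanSpace ℝ (Fin N) =>
        ((‖x‖ : ℂ)) ^ (-s - (N : ℂ))) (farBall N T ∩ Ω) volume :=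
  have h := zeta_at_infinity_absolutely_convergent_general N Ω T hT φ hφ σ hσdim
  ⟨h.1, fun s hs _ => h.2 s hs⟩
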